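/- There is a universal constant $K>0$ such that the following holds. Let $A$ be a finite set with $a:=|A|$, let $H$ be a complex Hilbert space of finite dimension $d$, let $V$ assign to every $x\in A$ a quantum state $V(x)$ on $H$ (a positive semidefinite operator of trace $1$), let $P$ be a probability distribution on $A$, let $n\ge 1$ be an integer and let $\alpha>0$. Put $PV:=\sum_{x\in A}P(x)V(x)$, let $S(\rho):=-\mathrm{tr}(\rho\log_2\rho)$ be the von Neumann entropy, and let $V^{\otimes n}(x^n):=V(x_1)\otimes\cdots\otimes V(x_n)$ for $x^n=(x_1,\dots,x_n)\in A^n$. Then there exists an orthogonal projection $\Pi$ on $H^{\otimes n}$ that commutes with $(PV)^{\otimes n}$ and satisfies (i) $\mathrm{tr}\big((PV)^{\otimes n}\,\Pi\big)\ \ge\ 1-\dfrac{d}{4a\alpha^2}$; (ii) $\mathrm{tr}(\Pi)\ \le\ 2^{\,nS(PV)+Kd\alpha\sqrt{an}}$; (iii) $\Pi\,(PV)^{\otimes n}\,\Pi\ \le\ 2^{-nS(PV)+Kd\alpha\sqrt{an}}\;\Pi$, where $X\le Y$ means that $Y-X$ is positive semidefinite; (iv) for every sequence $x^n\in A^n$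 of type $P$ (every $x\in A$ occurs exactly $nP(x)$ times in $x^n$), $\mathrm{tr}\big(V^{\otimes n}(x^n)\,\Pi\big)\ \ge\ 1-\dfrac{ad}{4\alpha^2}$. -/

import Mathlib

open scoped ComplexOrder

noncomputable section

/-- The Loewner order on operators: `X ≤ Y` iff `Y - X` is positive semidefinite. -/
def loewnerLE {ι : Type*} [Fintype ι] (X Y : Matrix ι ι ℂ) : Prop := (Y - X).PosSemidef

/-- A quantum state: a positive semidefinite operator with unit trace. A Hilbert space of
dimension `d` is represented by an orthonormal basis indexed by a type `ι` with `d` elements. -/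
def IsState {ι : Type*} [Fintype ι] (ρ : Matrix ι ι ℂ) : Prop := ρ.PosSemidef ∧ ρ.trace = 1

/-- The von Neumann entropy `S(ρ) = -tr(ρ log₂ ρ) = -∑ λᵢ log₂ λᵢ` over the eigenvalues `λᵢ`
of `ρ` with multiplicity, where `0 log₂ 0 = 0`. -/
def vnEntropy {ι : Type*} [Fintype ι] [DecidableEq ι] (ρ : Matrix ι ι ℂ) : ℝ :=
  if h : ρ.IsHermitian then -∑ i, h.eigenvalues i * Real.logb 2 (h.eigenvalues i) else 0

/-- A probability distribution on a finite set. -/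
def IsDist {A : Type*} [Fintype A] (P : A → ℝ) : Prop := (∀ a, 0 ≤ P a) ∧ ∑ a, P a = 1

/-- The averaged output `PV = ∑ₐ P(a) V(a)`. -/
def avgOutput {A ι : Type*} [Fintype A] (P : A → ℝ) (V : A → Matrix ι ι ℂ) : Matrix ι ι ℂ :=
  ∑ a, (P a : ℂ) • V a

/-- The tensor product `M 0 ⊗ ⋯ ⊗ M (n - 1)`, on the product basis indexed by `Fin n → ι`. -/
def tensorProd {n : ℕ} {ι : Type*} (M : Fin n → Matrix ι ι ℂ) :
    Matrix (Fin n → ι) (Fin n → ι) ℂ :=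
  Matrix.of fun i j => ∏ k, M k (i k) (j k)

/-- The tensor power `ρ^{⊗n}`. -/
def tensorPow {ι : Type*} (ρ : Matrix ι ι ℂ) (n : ℕ) : Matrix (Fin n → ι) (Fin n → ι) ℂ :=
  tensorProd fun _ => ρ

/-- The `n`-fold extension `V^{⊗n}(xⁿ) = V(x₁) ⊗ ⋯ ⊗ V(xₙ)` of a cq channel. -/
def cqPow {A ι : Type*} (V : A → Matrix ι ι ℂ) {n : ℕ} (x : Fin n → A) :
    Matrix (Fin n → ι) (Fin n → ι) ℂ :=
  tensorProd fun k => V (x k)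

/-- The sequence `x` has type `P`: every `a` occurs exactly `n P(a)` times in it. -/
def HasType {A : Type*} [DecidableEq A] {n : ℕ} (P : A → ℝ) (x : Fin n → A) : Prop :=
  ∀ a, ((Finset.univ.filter fun k => x k = a).card : ℝ) = n * P a

end

/-!
Put `ρ = PV` and `t = 6dα√(an)`. The projector is the entropy-typical one: the spectral projection
of `ρ^{⊗n}` onto the eigenvalues in `[2^{-nS(ρ)-t}, 2^{-nS(ρ)+t}]`. The operator bound is immediate
from functional calculus, and the rank bound is Markov's inequality for the trace.

Both probability bounds are instances of one fact about states with `∑ₖ Mₖ = nρ`; taking `Mₖ = ρ`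
gives the first and, for `xⁿ` of type `P`, taking `Mₖ = V(xₖ)` gives the second. Measuring
`M₁ ⊗ ⋯ ⊗ Mₙ` in the product of an eigenbasis of `ρ` yields independent outcomes whose distributions
average to the spectrum `p` of `ρ`. Hence the sum of the `log₂ p` of the outcomes has mean `-nS(ρ)`,
and its variance is at most `n ∑ᵢ pᵢ (log₂ pᵢ)² ≤ 9nd`, since `x (log₂ x)² ≤ 9` on `[0, 1]`.
Chebyshev's inequality then bounds the failure probability by `9nd / t² = 1 / (4adα²)`.
-/

noncomputable section

namespace TypicalProjector

open MeasureTheory ProbabilityTheory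
open scoped Matrix MatrixOrder

section Concentration

theorem one_sub_le_measureReal_pi_abs_sum_sub_lt {κ : Type*} [Fintype κ] {Ω : κ → Type*}
    [∀ k, MeasurableSpace (Ω k)] (μ : ∀ k, Measure (Ω k)) [∀ k, IsProbabilityMeasure (μ k)]
    {X : ∀ k, Ω k → ℝ} (hX : ∀ k, MemLp (X k) 2 (μ k)) {t : ℝ} (ht : 0 < t) :
    1 - (∑ k, ∫ x, X k x ^ 2 ∂μ k) / t ^ 2 ≤
      (Measure.pi μ).real {ω | |∑ k, X k (ω k) - ∑ k, ∫ x, X k x ∂μ k| < t} := by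
  have hX' (k : κ) : MemLp (fun ω : ∀ k, Ω k => X k (ω k)) 2 (Measure.pi μ) :=
    (hX k).comp_measurePreserving (measurePreserving_eval μ k)
  have hmean : ∫ ω, ∑ k, X k (ω k) ∂Measure.pi μ = ∑ k, ∫ x, X k x ∂μ k := by
    rw [integral_finsetSum _ fun k _ => (hX' k).integrable one_le_two]
    exact Finset.sum_congr rfl fun k _ =>
      integral_comp_eval (hX k).aestronglyMeasurable
  have hvar : Var[fun ω => ∑ k, X k (ω k); Measure.pi μ] ≤ ∑ k, ∫ x, X k x ^ 2 ∂μ k := by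
    have h := variance_sum_pi hX
    rw [Finset.sum_fn] at h
    exact h.trans_le <| Finset.sum_le_sum fun k _ =>
      variance_le_expectation_sq (hX k).aestronglyMeasurable
  have htail : (Measure.pi μ).real {ω | t ≤ |∑ k, X k (ω k) - ∑ k, ∫ x, X k x ∂μ k|} ≤
      (∑ k, ∫ x, X k x ^ 2 ∂μ k) / t ^ 2 := by
    have h := meas_ge_le_variance_div_sq (memLp_finsetSum Finset.univ fun k _ => hX' k) ht
    rw [hmean] at h
    refine (ENNReal.toReal_le_of_le_ofReal ?_ h).trans ?_
    · exact div_nonneg (variance_nonneg _ _) (sq_nonneg t)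
    · gcongr
  have hcover : {ω : ∀ k, Ω k | |∑ k, X k (ω k) - ∑ k, ∫ x, X k x ∂μ k| < t} ∪
      {ω | t ≤ |∑ k, X k (ω k) - ∑ k, ∫ x, X k x ∂μ k|} = Set.univ :=
    Set.eq_univ_of_forall fun ω => lt_or_ge _ t
  have hunion := measureReal_union_le (μ := Measure.pi μ)
    {ω | |∑ k, X k (ω k) - ∑ k, ∫ x, X k x ∂μ k| < t}
    {ω | t ≤ |∑ k, X k (ω k) - ∑ k, ∫ x, X k x ∂μ k|}
  rw [hcover, probReal_univ] at hunion
  linarith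

theorem mul_logb_two_sq_le {x : ℝ} (hx : x ∈ Set.Icc 0 1) : x * Real.logb 2 x ^ 2 ≤ 9 := by
  rcases hx.1.eq_or_lt with rfl | hx0
  · simp
  have hlog : x * Real.log x ^ 2 ≤ 4 := by
    have h := Real.abs_log_mul_self_rpow_lt x (1 / 2) hx0 hx.2 (by norm_num)
    rw [← Real.sqrt_eq_rpow] at h
    calc x * Real.log x ^ 2 = |Real.log x * √x| ^ 2 := by
          rw [sq_abs, mul_pow, Real.sq_sqrt hx.1, mul_comm]
      _ ≤ (1 / (1 / 2)) ^ 2 := by gcongr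
      _ = 4 := by norm_num
  have hlog_two : (2 / 3) ^ 2 ≤ Real.log 2 ^ 2 := by
    gcongr
    linarith [Real.log_two_gt_d9]
  rw [Real.logb, div_pow, mul_div_assoc', div_le_iff₀ (by positivity)]
  linarith

theorem ae_pi_ne_zero_of_sum_measureReal_eq {κ ι : Type*} [Fintype κ] [Countable ι]
    [MeasurableSpace ι] (μ : κ → Measure ι) [∀ k, IsFiniteMeasure (μ k)] {w : ι → ℝ}
    (hw : ∀ i, ∑ k, (μ k).real {i} = w i) : ∀ᵐ J ∂Measure.pi μ, ∀ k, w (J k) ≠ 0 := by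
  refine ae_all_iff.2 fun k => Measure.tendsto_eval_ae_ae.eventually (p := fun i => w i ≠ 0) ?_
  rw [ae_iff_of_countable]
  intro i hi h0
  refine hi ((measureReal_eq_zero_iff).1 ?_)
  rw [← hw, Finset.sum_eq_zero_iff_of_nonneg fun _ _ => measureReal_nonneg] at h0
  exact h0 k (Finset.mem_univ k)

variable {κ ι : Type*} [Fintype κ] [Fintype ι] [MeasurableSpace ι] [MeasurableSingletonClass ι]

theorem sum_integral_eq_of_sum_measureReal_eq (μ : κ → Measure ι) [∀ k, IsFiniteMeasure (μ k)]
    {w : ι → ℝ} (hw : ∀ i, ∑ k, (μ k).real {i} = w i) (f : ι → ℝ) :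
    ∑ k, ∫ i, f i ∂μ k = ∑ i, w i * f i := by
  simp_rw [integral_fintype (Integrable.of_finite (f := f)), smul_eq_mul]
  rw [Finset.sum_comm]
  simp_rw [← Finset.sum_mul, hw]

theorem prod_mem_Icc_two_rpow_iff {x : κ → ℝ} (hx : ∀ k, 0 < x k) {a t : ℝ} :
    ∏ k, x k ∈ Set.Icc ((2 : ℝ) ^ (a - t)) (2 ^ (a + t)) ↔ |∑ k, Real.logb 2 (x k) - a| ≤ t := by
  have hprod : 0 < ∏ k, x k := Finset.prod_pos fun k _ => hx k
  rw [← Real.logb_prod _ _ fun k _ => (hx k).ne', Set.mem_Icc,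
    ← Real.le_logb_iff_rpow_le one_lt_two hprod, ← Real.logb_le_iff_le_rpow one_lt_two hprod,
    abs_sub_le_iff, and_comm]
  grind

theorem one_sub_le_measureReal_pi_prod_mem_Icc (μ : κ → Measure ι)
    [∀ k, IsProbabilityMeasure (μ k)] {p : ι → ℝ} (hp : p ∈ stdSimplex ℝ ι)
    (hμ : ∀ i, ∑ k, (μ k).real {i} = Fintype.card κ * p i) {t : ℝ} (ht : 0 < t) :
    1 - 9 * Fintype.card κ * Fintype.card ι / t ^ 2 ≤
      (Measure.pi μ).real {J | ∏ k, p (J k) ∈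
        Set.Icc ((2 : ℝ) ^ (Fintype.card κ * ∑ i, p i * Real.logb 2 (p i) - t))
          (2 ^ (Fintype.card κ * ∑ i, p i * Real.logb 2 (p i) + t))} := by
  have hmoment (f : ι → ℝ) : ∑ k, ∫ i, f i ∂μ k = Fintype.card κ * ∑ i, p i * f i := by
    simp_rw [sum_integral_eq_of_sum_measureReal_eq μ hμ, mul_assoc, Finset.mul_sum]
  have hsecond : ∑ i, p i * Real.logb 2 (p i) ^ 2 ≤ Fintype.card ι * 9 := by
    simpa using Finset.sum_le_sum fun i (_ : i ∈ Finset.univ) =>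
      mul_logb_two_sq_le (mem_Icc_of_mem_stdSimplex hp i)
  have hpos : ∀ᵐ J ∂Measure.pi μ, ∀ k, 0 < p (J k) := by
    filter_upwards [ae_pi_ne_zero_of_sum_measureReal_eq μ hμ] with J hJ k
    exact (hp.1 (J k)).lt_of_ne' (right_ne_zero_of_mul (hJ k))
  calc 1 - 9 * Fintype.card κ * Fintype.card ι / t ^ 2
      ≤ 1 - (∑ k, ∫ i, Real.logb 2 (p i) ^ 2 ∂μ k) / t ^ 2 := by
        rw [hmoment, mul_assoc, mul_left_comm, mul_comm 9]
        gcongr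
    _ ≤ (Measure.pi μ).real {J | |∑ k, Real.logb 2 (p (J k)) -
          ∑ k, ∫ i, Real.logb 2 (p i) ∂μ k| < t} :=
        one_sub_le_measureReal_pi_abs_sum_sub_lt μ (fun _ => MemLp.of_discrete) ht
    _ ≤ _ := by
        refine ENNReal.toReal_mono (measure_ne_top _ _) (measure_mono_ae ?_)
        filter_upwards [hpos] with J hJ hlt
        rw [hmoment] at hlt
        exact (prod_mem_Icc_two_rpow_iff hJ).2 (le_of_lt hlt)

end Concentration

section SpectralProjection

open Matrix

variable {κ : Type*} [Fintype κ] [DecidableEq κ]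

/-- The spectral projection of the Hermitian matrix `A` onto its eigenvalues in `s`, as the
functional calculus of the indicator function of `s`. -/
def spectralProjection (A : Matrix κ κ ℂ) (s : Set ℝ) : Matrix κ κ ℂ :=
  cfc (s.indicator 1) A

theorem cfc_mul_cfc (f g : ℝ → ℝ) (A : Matrix κ κ ℂ) : cfc f A * cfc g A = cfc (f * g) A :=
  (cfc_mul f g A (finite_real_spectrum.continuousOn f) (finite_real_spectrum.continuousOn g)).symm

theorem cfc_le_cfc {f g : ℝ → ℝ} {A : Matrix κ κ ℂ} (hfg : ∀ x ∈ spectrum ℝ A, f x ≤ g x) :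
    cfc f A ≤ cfc g A :=
  cfc_mono hfg (finite_real_spectrum.continuousOn f) (finite_real_spectrum.continuousOn g)

theorem smul_cfc (c : ℝ) (f : ℝ → ℝ) (A : Matrix κ κ ℂ) : c • cfc f A = cfc (c • f) A :=
  (cfc_smul c f A (finite_real_spectrum.continuousOn f)).symm

theorem isStarProjection_spectralProjection (A : Matrix κ κ ℂ) (s : Set ℝ) :
    IsStarProjection (spectralProjection A s) where
  isIdempotentElem := by
    rw [IsIdempotentElem, spectralProjection, cfc_mul_cfc]
    congr 1
    ext x
    by_cases hx : x ∈ s <;> simp [hx]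
  isSelfAdjoint := cfc_predicate _ A

theorem commute_spectralProjection {A : Matrix κ κ ℂ} (hA : A.IsHermitian) (s : Set ℝ) :
    Commute (spectralProjection A s) A :=
  IsSelfAdjoint.commute_cfc hA (Commute.refl A) _

theorem loewnerLE_spectralProjection_mul_mul {A : Matrix κ κ ℂ} (hA : A.IsHermitian) {s : Set ℝ}
    {c : ℝ} (hs : s ⊆ Set.Iic c) :
    loewnerLE (spectralProjection A s * A * spectralProjection A s)
      ((c : ℂ) • spectralProjection A s) := by
  have hid : cfc id A = A := cfc_id ℝ A hA
  rw [loewnerLE, ← Matrix.le_iff, Complex.coe_smul]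
  nth_rw 2 [← hid]
  rw [spectralProjection, cfc_mul_cfc, cfc_mul_cfc, smul_cfc]
  refine cfc_le_cfc fun x _ => ?_
  by_cases hx : x ∈ s
  · simpa [hx] using hs hx
  · simp [hx]

theorem mul_re_trace_spectralProjection_le {A : Matrix κ κ ℂ} (hA : A.PosSemidef) {s : Set ℝ}
    {c : ℝ} (hs : s ⊆ Set.Ici c) :
    c * (spectralProjection A s).trace.re ≤ A.trace.re := by
  have hid : cfc id A = A := cfc_id ℝ A hA.isHermitian
  have hle : c • spectralProjection A s ≤ A := by
    nth_rw 2 [← hid]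
    rw [spectralProjection, smul_cfc]
    refine cfc_le_cfc fun x hx => ?_
    by_cases hxs : x ∈ s
    · simpa [hxs] using hs hxs
    · simpa [hxs] using spectrum_nonneg_of_nonneg hA.nonneg hx
  have htrace := (Complex.nonneg_iff.1 (Matrix.le_iff.1 hle).trace_nonneg).1
  rw [trace_sub, trace_smul, Complex.sub_re, Complex.smul_re, smul_eq_mul] at htrace
  exact sub_nonneg.1 htrace

end SpectralProjection

section Eigenbasis

open Matrix

variable {κ : Type*} [Fintype κ] [DecidableEq κ]

/-- The Hermitian matrix with orthonormal eigenbasis the columns of `W` and eigenvalues `d`. -/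
def ofEigenbasis (W : unitaryGroup κ ℂ) (d : κ → ℝ) : Matrix κ κ ℂ :=
  W * diagonal (fun k => (d k : ℂ)) * star (W : Matrix κ κ ℂ)

/-- `Matrix.diagonal` as a homomorphism of real star algebras. -/
def diagonalStarAlgHom : (κ → ℂ) →⋆ₐ[ℝ] Matrix κ κ ℂ :=
  { diagonalAlgHom ℝ with map_star' := fun d => (diagonal_conjTranspose d).symm }

theorem isSelfAdjoint_ofReal_comp {κ : Type*} (d : κ → ℝ) : IsSelfAdjoint fun k => (d k : ℂ) :=
  Pi.isSelfAdjoint.2 fun k => Complex.conj_ofReal (d k)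

theorem cfc_diagonal_ofReal (f : ℝ → ℝ) (d : κ → ℝ) :
    cfc f (diagonal fun k => (d k : ℂ)) = diagonal fun k => (f (d k) : ℂ) := by
  -- Instance search does not find this functional calculus on the function type `κ → ℂ`.
  let : ContinuousFunctionalCalculus ℝ (κ → ℂ) IsSelfAdjoint :=
    IsSelfAdjoint.instContinuousFunctionalCalculus
  have hd := isSelfAdjoint_ofReal_comp d
  have hcont : ContinuousOn f (⋃ k, spectrum ℝ (d k : ℂ)) := by
    refine (Set.finite_iUnion fun k => ?_).continuousOn f
    rw [← Complex.coe_algebraMap, spectrum.scalar_eq]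
    exact Set.finite_singleton _
  calc cfc f (diagonal fun k => (d k : ℂ))
      = diagonalStarAlgHom (cfc f fun k => (d k : ℂ)) := by
        refine (diagonalStarAlgHom.map_cfc f _ ?_ ?_ hd (hd.map _)).symm
        · rwa [Pi.spectrum_eq]
        · exact continuous_id.matrix_diagonal
    _ = diagonalStarAlgHom fun k => cfc f (d k : ℂ) := by
        rw [cfc_map_pi (S := ℝ) f _ hcont hd fun k => Pi.isSelfAdjoint.1 hd k]
    _ = diagonal fun k => (f (d k) : ℂ) := by
        simp_rw [← Complex.coe_algebraMap, cfc_algebraMap]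
        rfl

theorem cfc_ofEigenbasis (f : ℝ → ℝ) (W : unitaryGroup κ ℂ) (d : κ → ℝ) :
    cfc f (ofEigenbasis W d) = ofEigenbasis W (f ∘ d) := by
  have hd : IsSelfAdjoint (diagonal fun k => (d k : ℂ)) :=
    (isSelfAdjoint_ofReal_comp d).map diagonalStarAlgHom
  have hW : Continuous (Unitary.conjStarAlgAut ℝ (Matrix κ κ ℂ) W) := by
    change Continuous fun A : Matrix κ κ ℂ => (W * A * star W : Matrix κ κ ℂ)
    fun_prop
  have h := StarAlgHomClass.map_cfc (Unitary.conjStarAlgAut ℝ (Matrix κ κ ℂ) W) f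
    (diagonal fun k => (d k : ℂ)) (finite_real_spectrum.continuousOn f) hW hd (hd.map _)
  rw [cfc_diagonal_ofReal] at h
  exact h.symm

theorem ofEigenbasis_eigenvalues {A : Matrix κ κ ℂ} (hA : A.IsHermitian) :
    ofEigenbasis hA.eigenvectorUnitary hA.eigenvalues = A :=
  hA.spectral_theorem.symm

end Eigenbasis

section TensorProduct

open Matrix

variable {ι : Type*} {n : ℕ}

theorem star_tensorProd (M : Fin n → Matrix ι ι ℂ) :
    star (tensorProd M) = tensorProd fun k => star (M k) := by
  ext i j
  simp [tensorProd, star_apply]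

theorem isHermitian_tensorProd {M : Fin n → Matrix ι ι ℂ} (hM : ∀ k, (M k).IsHermitian) :
    (tensorProd M).IsHermitian :=
  (star_tensorProd M).trans <| congrArg tensorProd <| funext fun k => hM k

theorem tensorProd_diagonal [DecidableEq ι] (d : Fin n → ι → ℂ) :
    tensorProd (fun k => diagonal (d k)) = diagonal fun J : Fin n → ι => ∏ k, d k (J k) := by
  ext i j
  by_cases h : i = j
  · simp [tensorProd, h]
  · obtain ⟨k, hk⟩ := Function.ne_iff.mp h
    rw [diagonal_apply_ne _ h]
    exact Finset.prod_eq_zero (Finset.mem_univ k) (diagonal_apply_ne _ hk)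

theorem tensorProd_one [DecidableEq ι] : tensorProd (fun _ : Fin n => (1 : Matrix ι ι ℂ)) = 1 := by
  simpa using tensorProd_diagonal fun (_ : Fin n) (_ : ι) => (1 : ℂ)

variable [Fintype ι]

theorem tensorProd_mul (M N : Fin n → Matrix ι ι ℂ) :
    tensorProd M * tensorProd N = tensorProd fun k => M k * N k := by
  classical
  ext i j
  simp only [tensorProd, mul_apply, of_apply, ← Finset.prod_mul_distrib]
  exact (Fintype.prod_sum fun k l => M k (i k) l * N k l (j k)).symm

theorem trace_tensorProd (M : Fin n → Matrix ι ι ℂ) :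
    (tensorProd M).trace = ∏ k, (M k).trace := by
  classical
  exact (Fintype.prod_sum fun k i => M k i i).symm

omit [Fintype ι] in
theorem posSemidef_tensorProd [Finite ι] {M : Fin n → Matrix ι ι ℂ}
    (hM : ∀ k, (M k).PosSemidef) : (tensorProd M).PosSemidef := by
  classical
  have := Fintype.ofFinite ι
  choose B hB using fun k => CStarAlgebra.nonneg_iff_eq_star_mul_self.1 (hM k).nonneg
  rw [funext hB, ← tensorProd_mul, ← star_tensorProd]
  exact posSemidef_conjTranspose_mul_self _

theorem isState_tensorProd {M : Fin n → Matrix ι ι ℂ} (hM : ∀ k, IsState (M k)) :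
    IsState (tensorProd M) where
  left := posSemidef_tensorProd fun k => (hM k).1
  right := by simp [trace_tensorProd, (hM _).2]

variable [DecidableEq ι]

/-- The unitary `U^{⊗n}`, whose columns are the product basis built from the columns of `U`. -/
def unitaryTensorPow (U : unitaryGroup ι ℂ) (n : ℕ) : unitaryGroup (Fin n → ι) ℂ :=
  ⟨tensorPow (U : Matrix ι ι ℂ) n, by
    rw [mem_unitaryGroup_iff, tensorPow, star_tensorProd, tensorProd_mul,
      mem_unitaryGroup_iff.1 U.2, tensorProd_one]⟩

theorem coe_unitaryTensorPow (U : unitaryGroup ι ℂ) (n : ℕ) :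
    (unitaryTensorPow U n : Matrix (Fin n → ι) (Fin n → ι) ℂ) = tensorProd fun _ => U :=
  rfl

theorem tensorPow_ofEigenbasis (U : unitaryGroup ι ℂ) (d : ι → ℝ) (n : ℕ) :
    tensorPow (ofEigenbasis U d) n =
      ofEigenbasis (unitaryTensorPow U n) fun J => ∏ k, d (J k) := by
  simp_rw [ofEigenbasis, tensorPow, coe_unitaryTensorPow, star_tensorProd,
    Complex.ofReal_prod, ← tensorProd_diagonal fun _ i => (d i : ℂ), tensorProd_mul]

end TensorProduct

section Measurement

open Matrix

variable {κ : Type*} [Fintype κ]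

/-- The probability `(W* σ W) k k` of the outcome `k` when the state `σ` is measured in the
orthonormal basis given by the columns of `W`. -/
def outcomeProb (W σ : Matrix κ κ ℂ) (k : κ) : ℝ := ((star W * σ * W) k k).re

theorem outcomeProb_nonneg (W : Matrix κ κ ℂ) {σ : Matrix κ κ ℂ} (hσ : σ.PosSemidef) (k : κ) :
    0 ≤ outcomeProb W σ k :=
  (Complex.nonneg_iff.1 (hσ.conjTranspose_mul_mul_same W).diag_nonneg).1

theorem ofReal_outcomeProb (W : Matrix κ κ ℂ) {σ : Matrix κ κ ℂ} (hσ : σ.PosSemidef) (k : κ) :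
    (outcomeProb W σ k : ℂ) = (star W * σ * W) k k :=
  (Complex.eq_re_of_ofReal_le (hσ.conjTranspose_mul_mul_same W).diag_nonneg).symm

theorem outcomeProb_smul (W σ : Matrix κ κ ℂ) (c : ℝ) (k : κ) :
    outcomeProb W ((c : ℂ) • σ) k = c * outcomeProb W σ k := by
  simp [outcomeProb]

theorem outcomeProb_sum {J : Type*} [Fintype J] (W : Matrix κ κ ℂ) (M : J → Matrix κ κ ℂ)
    (k : κ) : outcomeProb W (∑ j, M j) k = ∑ j, outcomeProb W (M j) k := by
  simp [outcomeProb, Matrix.mul_sum, Matrix.sum_mul, Matrix.sum_apply]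

/-- The distribution of the outcome when the state `σ` is measured in the orthonormal basis given
by the columns of `W`. -/
def outcomeMeasure [MeasurableSpace κ] (W σ : Matrix κ κ ℂ) : Measure κ :=
  ∑ k, ENNReal.ofReal (outcomeProb W σ k) • Measure.dirac k

instance [MeasurableSpace κ] (W σ : Matrix κ κ ℂ) : IsFiniteMeasure (outcomeMeasure W σ) := by
  constructor
  simp [outcomeMeasure, ENNReal.sum_lt_top]

theorem outcomeMeasure_singleton [MeasurableSpace κ] [MeasurableSingletonClass κ]
    (W σ : Matrix κ κ ℂ) (k : κ) :
    outcomeMeasure W σ {k} = ENNReal.ofReal (outcomeProb W σ k) := by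
  rw [outcomeMeasure, Measure.finsetSum_apply, Finset.sum_eq_single k]
  · simp
  · intro l _ hl
    simp [hl]
  · simp

theorem outcomeMeasure_real_singleton [MeasurableSpace κ] [MeasurableSingletonClass κ]
    (W : Matrix κ κ ℂ) {σ : Matrix κ κ ℂ} (hσ : σ.PosSemidef) (k : κ) :
    (outcomeMeasure W σ).real {k} = outcomeProb W σ k := by
  rw [measureReal_def, outcomeMeasure_singleton, ENNReal.toReal_ofReal (outcomeProb_nonneg W hσ k)]

variable [DecidableEq κ]

theorem sum_outcomeProb (W : unitaryGroup κ ℂ) (σ : Matrix κ κ ℂ) :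
    ∑ k, outcomeProb W σ k = σ.trace.re := by
  have hW : (W : Matrix κ κ ℂ) * star (W : Matrix κ κ ℂ) = 1 := Unitary.coe_mul_star_self W
  calc ∑ k, outcomeProb W σ k = (star (W : Matrix κ κ ℂ) * σ * W).trace.re := by
        simp [outcomeProb, trace]
    _ = σ.trace.re := by rw [trace_mul_comm, ← mul_assoc, hW, one_mul]

theorem outcomeProb_ofEigenbasis (W : unitaryGroup κ ℂ) (d : κ → ℝ) (k : κ) :
    outcomeProb W (ofEigenbasis W d) k = d k := by
  have hW : star (W : Matrix κ κ ℂ) * W = 1 := Unitary.coe_star_mul_self W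
  have hdiag : star (W : Matrix κ κ ℂ) * ofEigenbasis W d * W = diagonal fun k => (d k : ℂ) := by
    simp only [ofEigenbasis, ← mul_assoc]
    rw [hW, one_mul, mul_assoc, hW, mul_one]
  simp [outcomeProb, hdiag]

theorem re_trace_mul_ofEigenbasis (σ : Matrix κ κ ℂ) (W : unitaryGroup κ ℂ) (d : κ → ℝ) :
    (σ * ofEigenbasis W d).trace.re = ∑ k, outcomeProb W σ k * d k := by
  rw [ofEigenbasis, ← mul_assoc, trace_mul_comm, ← mul_assoc, ← mul_assoc]
  simp [trace, mul_diagonal, outcomeProb]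

theorem outcomeProb_tensorProd {n : ℕ} (W : unitaryGroup κ ℂ) {M : Fin n → Matrix κ κ ℂ}
    (hM : ∀ k, (M k).PosSemidef) (J : Fin n → κ) :
    outcomeProb (unitaryTensorPow W n) (tensorProd M) J = ∏ k, outcomeProb W (M k) (J k) := by
  apply Complex.ofReal_injective
  rw [ofReal_outcomeProb _ (posSemidef_tensorProd hM), coe_unitaryTensorPow, star_tensorProd,
    tensorProd_mul, tensorProd_mul, Complex.ofReal_prod]
  simp_rw [ofReal_outcomeProb _ (hM _)]
  rfl

variable [MeasurableSpace κ]

theorem isProbabilityMeasure_outcomeMeasure (W : unitaryGroup κ ℂ) {σ : Matrix κ κ ℂ}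
    (hσ : IsState σ) : IsProbabilityMeasure (outcomeMeasure W σ) := by
  have hsum := sum_outcomeProb W σ
  rw [hσ.2, Complex.one_re] at hsum
  constructor
  simp [outcomeMeasure, ← ENNReal.ofReal_sum_of_nonneg fun k _ => outcomeProb_nonneg _ hσ.1 k, hsum]

variable [MeasurableSingletonClass κ]

theorem outcomeMeasure_tensorProd {n : ℕ} (W : unitaryGroup κ ℂ) {M : Fin n → Matrix κ κ ℂ}
    (hM : ∀ k, (M k).PosSemidef) :
    outcomeMeasure (unitaryTensorPow W n) (tensorProd M) =
      Measure.pi fun k => outcomeMeasure W (M k) := by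
  refine Measure.ext_of_singleton fun J => ?_
  rw [outcomeMeasure_singleton, outcomeProb_tensorProd W hM,
    ENNReal.ofReal_prod_of_nonneg fun k _ => outcomeProb_nonneg _ (hM k) _, Measure.pi_singleton]
  simp_rw [outcomeMeasure_singleton]

theorem re_trace_mul_spectralProjection_ofEigenbasis (W : unitaryGroup κ ℂ) (d : κ → ℝ)
    {σ : Matrix κ κ ℂ} (hσ : σ.PosSemidef) (s : Set ℝ) :
    (σ * spectralProjection (ofEigenbasis W d) s).trace.re =
      (outcomeMeasure W σ).real (d ⁻¹' s) := by
  classical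
  calc (σ * spectralProjection (ofEigenbasis W d) s).trace.re
      = ∑ k, outcomeProb W σ k * s.indicator 1 (d k) := by
        rw [spectralProjection, cfc_ofEigenbasis, re_trace_mul_ofEigenbasis]
        rfl
    _ = ∑ k with d k ∈ s, outcomeProb W σ k := by
        simp [Set.indicator_apply, Finset.sum_filter]
    _ = (outcomeMeasure W σ).real (d ⁻¹' s) := by
        simp_rw [← outcomeMeasure_real_singleton _ hσ]
        rw [sum_measureReal_singleton]
        congr 1
        ext
        simp

end Measurement

section State

open Matrix

variable {A ι : Type*} [Fintype A] [Fintype ι]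

theorem IsState.nonempty {ρ : Matrix ι ι ℂ} (hρ : IsState ρ) : Nonempty ι := by
  by_contra! h
  simpa [trace] using hρ.2

theorem IsDist.nonempty {P : A → ℝ} (hP : IsDist P) : Nonempty A := by
  by_contra! h
  simpa using hP.2

theorem isState_avgOutput {P : A → ℝ} (hP : IsDist P) {V : A → Matrix ι ι ℂ}
    (hV : ∀ a, IsState (V a)) : IsState (avgOutput P V) where
  left := posSemidef_sum _ fun a _ => (hV a).1.smul (by simpa using hP.1 a)
  right := by
    simp only [avgOutput, trace_sum, trace_smul, (hV _).2, smul_eq_mul, mul_one]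
    exact_mod_cast hP.2

omit [Fintype ι] in
theorem sum_eq_smul_avgOutput_of_hasType [DecidableEq A] {n : ℕ} {P : A → ℝ} {x : Fin n → A}
    (hx : HasType P x) (V : A → Matrix ι ι ℂ) :
    ∑ k, V (x k) = (n : ℂ) • avgOutput P V := by
  simp_rw [avgOutput, Finset.smul_sum, smul_smul]
  rw [← Finset.sum_fiberwise Finset.univ x]
  refine Finset.sum_congr rfl fun a _ => ?_
  rw [Finset.sum_congr rfl fun k hk => by rw [(Finset.mem_filter.mp hk).2], Finset.sum_const,
    ← Nat.cast_smul_eq_nsmul ℂ]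
  congr 1
  exact_mod_cast hx a

variable [DecidableEq ι]

theorem eigenvalues_mem_stdSimplex {ρ : Matrix ι ι ℂ} (hρ : IsState ρ) :
    hρ.1.isHermitian.eigenvalues ∈ stdSimplex ℝ ι := by
  refine ⟨hρ.1.eigenvalues_nonneg, ?_⟩
  have h := congrArg Complex.re hρ.1.isHermitian.trace_eq_sum_eigenvalues
  simpa [hρ.2] using h.symm

theorem vnEntropy_eq_neg_sum {ρ : Matrix ι ι ℂ} (hρ : ρ.IsHermitian) :
    vnEntropy ρ = -∑ i, hρ.eigenvalues i * Real.logb 2 (hρ.eigenvalues i) :=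
  dif_pos hρ

end State

section Typical

open Matrix

variable {ι : Type*} [Fintype ι] [DecidableEq ι]

/-- The projector onto the entropy-typical subspace of `ρ^{⊗n}`, spanned by the eigenvectors whose
eigenvalue is `2^{-nS(ρ)}` up to a factor `2^{±t}`. -/
def typicalProjector (ρ : Matrix ι ι ℂ) (n : ℕ) (t : ℝ) : Matrix (Fin n → ι) (Fin n → ι) ℂ :=
  spectralProjection (tensorPow ρ n)
    (Set.Icc (2 ^ (-(n : ℝ) * vnEntropy ρ - t)) (2 ^ (-(n : ℝ) * vnEntropy ρ + t)))

theorem re_trace_typicalProjector_le {ρ : Matrix ι ι ℂ} (hρ : IsState ρ) (n : ℕ) (t : ℝ) :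
    (typicalProjector ρ n t).trace.re ≤ 2 ^ ((n : ℝ) * vnEntropy ρ + t) := by
  have hpow := isState_tensorProd fun _ : Fin n => hρ
  have hmarkov : 2 ^ (-(n : ℝ) * vnEntropy ρ - t) * (typicalProjector ρ n t).trace.re ≤ 1 := by
    calc _ ≤ (tensorProd fun _ : Fin n => ρ).trace.re :=
          mul_re_trace_spectralProjection_le hpow.1 Set.Icc_subset_Ici_self
      _ = 1 := by rw [hpow.2, Complex.one_re]
  rw [← le_div_iff₀' (by positivity), one_div, ← Real.rpow_neg zero_le_two] at hmarkov
  exact hmarkov.trans_eq (by congr 1; ring)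

theorem loewnerLE_typicalProjector {ρ : Matrix ι ι ℂ} (hρ : ρ.IsHermitian) (n : ℕ) (t : ℝ) :
    loewnerLE (typicalProjector ρ n t * tensorPow ρ n * typicalProjector ρ n t)
      (((2 ^ (-(n : ℝ) * vnEntropy ρ + t) : ℝ) : ℂ) • typicalProjector ρ n t) :=
  loewnerLE_spectralProjection_mul_mul (isHermitian_tensorProd fun _ => hρ)
    Set.Icc_subset_Iic_self

theorem one_sub_le_re_trace_tensorProd_mul_spectralProjection (U : unitaryGroup ι ℂ) {p : ι → ℝ}
    (hp : p ∈ stdSimplex ℝ ι) {n : ℕ} {M : Fin n → Matrix ι ι ℂ} (hM : ∀ k, IsState (M k))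
    (hsum : ∑ k, M k = (n : ℂ) • ofEigenbasis U p) {t : ℝ} (ht : 0 < t) :
    1 - 9 * n * Fintype.card ι / t ^ 2 ≤
      (tensorProd M * spectralProjection (tensorPow (ofEigenbasis U p) n)
        (Set.Icc (2 ^ (n * ∑ i, p i * Real.logb 2 (p i) - t))
          (2 ^ (n * ∑ i, p i * Real.logb 2 (p i) + t)))).trace.re := by
  let : MeasurableSpace ι := ⊤
  have (k : Fin n) := isProbabilityMeasure_outcomeMeasure U (hM k)
  have hmarginal (i : ι) :
      ∑ k, (outcomeMeasure U (M k)).real {i} = Fintype.card (Fin n) * p i := by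
    simp_rw [outcomeMeasure_real_singleton _ (hM _).1]
    rw [← outcomeProb_sum, hsum, ← Complex.ofReal_natCast, outcomeProb_smul,
      outcomeProb_ofEigenbasis, Fintype.card_fin]
  have h := one_sub_le_measureReal_pi_prod_mem_Icc _ hp hmarginal ht
  rw [Fintype.card_fin] at h
  rwa [tensorPow_ofEigenbasis, re_trace_mul_spectralProjection_ofEigenbasis _ _
    (posSemidef_tensorProd fun k => (hM k).1), outcomeMeasure_tensorProd _ fun k => (hM k).1]

theorem one_sub_le_re_trace_tensorProd_mul_typicalProjector {ρ : Matrix ι ι ℂ} (hρ : IsState ρ)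
    {n : ℕ} {M : Fin n → Matrix ι ι ℂ} (hM : ∀ k, IsState (M k))
    (hsum : ∑ k, M k = (n : ℂ) • ρ) {t : ℝ} (ht : 0 < t) :
    1 - 9 * n * Fintype.card ι / t ^ 2 ≤ (tensorProd M * typicalProjector ρ n t).trace.re := by
  have hspec := ofEigenbasis_eigenvalues hρ.1.isHermitian
  have h := one_sub_le_re_trace_tensorProd_mul_spectralProjection _
    (eigenvalues_mem_stdSimplex hρ) hM (hsum.trans (by rw [hspec])) ht
  rw [hspec] at h
  rwa [typicalProjector, vnEntropy_eq_neg_sum hρ.1.isHermitian, neg_mul_neg]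

end Typical

section Constants

variable {a d : ℝ}

theorem chebyshev_error_le_averaged_error {n α : ℝ} (ha : 0 < a) (hd : 1 ≤ d) (hn : 0 < n)
    (hα : 0 < α) : 9 * n * d / (6 * d * α * √(a * n)) ^ 2 ≤ d / (4 * a * α ^ 2) := by
  have : 0 < d := by positivity
  calc 9 * n * d / (6 * d * α * √(a * n)) ^ 2 = 1 / (4 * a * α ^ 2) / d := by
        rw [mul_pow, Real.sq_sqrt (by positivity)]
        field_simp
        norm_num
    _ ≤ 1 / (4 * a * α ^ 2) := div_le_self (by positivity) hd
    _ ≤ d / (4 * a * α ^ 2) := by gcongr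

theorem averaged_error_le_conditional_error {α : ℝ} (ha : 1 ≤ a) (hd : 0 ≤ d) :
    d / (4 * a * α ^ 2) ≤ a * d / (4 * α ^ 2) := by
  rw [mul_right_comm, ← div_div]
  exact (div_le_self (by positivity) ha).trans (by gcongr; exact le_mul_of_one_le_left hd ha)

end Constants

end TypicalProjector

end

open TypicalProjector

/-- Existence of averaged-output typical projectors compatible with conditional outputs. -/
theorem averaged_typical_projector :
    ∃ K : ℝ, 0 < K ∧
      ∀ (A : Type*) [Fintype A] [DecidableEq A] (ι : Type*) [Fintype ι] [DecidableEq ι]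
        (V : A → Matrix ι ι ℂ), (∀ a, IsState (V a)) →
      ∀ P : A → ℝ, IsDist P →
      ∀ n : ℕ, 1 ≤ n → ∀ α : ℝ, 0 < α →
      ∃ E : Matrix (Fin n → ι) (Fin n → ι) ℂ,
        IsStarProjection E ∧
        Commute E (tensorPow (avgOutput P V) n) ∧
        1 - (Fintype.card ι : ℝ) / (4 * Fintype.card A * α ^ 2) ≤
          (tensorPow (avgOutput P V) n * E).trace.re ∧
        E.trace.re ≤ (2 : ℝ) ^ ((n : ℝ) * vnEntropy (avgOutput P V) +
          K * Fintype.card ι * α * Real.sqrt (Fintype.card A * n)) ∧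
        loewnerLE (E * tensorPow (avgOutput P V) n * E)
          ((((2 : ℝ) ^ (-(n : ℝ) * vnEntropy (avgOutput P V) +
            K * Fintype.card ι * α * Real.sqrt (Fintype.card A * n)) : ℝ) : ℂ) • E) ∧
        ∀ x : Fin n → A, HasType P x →
          1 - (Fintype.card A : ℝ) * Fintype.card ι / (4 * α ^ 2) ≤
            (cqPow V x * E).trace.re := by
  refine ⟨6, by norm_num, fun A _ _ ι _ _ V hV P hP n hn α hα => ?_⟩
  have hρ := isState_avgOutput hP hV
  have := hP.nonempty
  have := hρ.nonempty
  have ha : 1 ≤ (Fintype.card A : ℝ) := mod_cast Fintype.card_pos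
  have hd : 1 ≤ (Fintype.card ι : ℝ) := mod_cast Fintype.card_pos
  set t := 6 * (Fintype.card ι : ℝ) * α * √(Fintype.card A * n)
  have ht : 0 < t := by positivity
  have hbound : 9 * n * Fintype.card ι / t ^ 2 ≤ Fintype.card ι / (4 * Fintype.card A * α ^ 2) :=
    chebyshev_error_le_averaged_error (by positivity) hd (by positivity) hα
  refine ⟨typicalProjector (avgOutput P V) n t, isStarProjection_spectralProjection _ _,
    commute_spectralProjection (isHermitian_tensorProd fun _ => hρ.1.isHermitian) _, ?_,
    re_trace_typicalProjector_le hρ n t, loewnerLE_typicalProjector hρ.1.isHermitian n t,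
    fun x hx => ?_⟩
  · exact (sub_le_sub_left hbound 1).trans <|
      one_sub_le_re_trace_tensorProd_mul_typicalProjector hρ (fun _ => hρ)
        (by simp [Nat.cast_smul_eq_nsmul]) ht
  · have hbound' := hbound.trans (averaged_error_le_conditional_error ha (by positivity))
    exact (sub_le_sub_left hbound' 1).trans <|
      one_sub_le_re_trace_tensorProd_mul_typicalProjector hρ (fun k => hV (x k))
        (sum_eq_smul_avgOutput_of_hasType hx V) ht
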